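/- Let P ∈ ℝ^{m×m} be an orthogonal projection matrix (P symmetric with P² = P), let σ ∈ ℝ^m be its diagonal (σ_i = P_ii), Σ = Diag(σ), and let P^(2) be the entrywise square of P. Write ‖x‖_Σ = (Σ_i σ_i x_i²)^{1/2} and let ∘ denote the entrywise (Schur) product. Then for all i, j ∈ [m] and all x, y ∈ ℝ^m with X = Diag(x): (1) σ_i = Σ_{j∈[m]} P_ij²; (2) 0 ⪯ P^(2) ⪯ Σ ⪯ I in the Loewner order; (3) P_ij² ≤ σ_i·σ_j; (4) |(P^(2)x)_i| ≤ σ_i·‖x‖_Σ; (5) |(P^(2)x)_i| ≤ σ_i·‖x‖_∞; (6) Σ_{i∈[m]} σ_i = rank(P); (7) |yᵀXP^(2)y| ≤ ‖y‖_Σ²·‖x‖_Σ; and (8) |yᵀ(P ∘ (PXP))y| ≤ ‖y‖_Σ²·‖x‖_Σ. -/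

import Mathlib

open Matrix Real BigOperators Pointwise

/-- The weighted norm `‖x‖_σ = (∑ i, σ i * x i ^ 2) ^ (1/2)`. -/
noncomputable def wNorm {m : ℕ} (σ x : Fin m → ℝ) : ℝ :=
  Real.sqrt (∑ i, σ i * x i ^ 2)

/-!
By Schur's product theorem, `A ⊙ ·` is monotone in the Loewner order whenever `0 ≤ A`. Since
`0 ≤ P ≤ 1`, applying `P ⊙ ·` and `1 ⊙ ·` gives `0 ≤ P ⊙ P ≤ P ⊙ 1 = Σ ≤ 1`, and applying `P ⊙ ·`
to `-(P|X|P) ≤ PXP ≤ P|X|P` bounds the quadratic form of `P ⊙ (PXP)` by that of the diagonal of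
`P|X|P`, whose entries are those of `(P ⊙ P)|x|`. The bounds by `‖·‖_Σ` come from Cauchy–Schwarz,
using that the `i`-th row of `P ⊙ P` sums to `σ i` and is dominated by `σ i • σ`.
-/

section Loewner

open scoped ComplexOrder MatrixOrder

lemma hadamard_le_hadamard_left {ι 𝕜 : Type*} [RCLike 𝕜] {A B C : Matrix ι ι 𝕜}
    (hA : 0 ≤ A) (hBC : B ≤ C) : A ⊙ B ≤ A ⊙ C := by
  have hsub : A ⊙ C - A ⊙ B = A ⊙ (C - B) := by
    ext i j
    exact (mul_sub _ _ _).symm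
  rw [le_iff, hsub]
  exact (nonneg_iff_posSemidef.mp hA).hadamard (le_iff.mp hBC)

lemma apply_mul_star_apply_le_of_posSemidef {ι 𝕜 : Type*} [RCLike 𝕜] {A : Matrix ι ι 𝕜}
    (hA : A.PosSemidef) (i j : ι) : A i j * star (A i j) ≤ A i i * A j j := by
  have hdet : 0 ≤ (A.submatrix ![i, j] ![i, j]).det := (hA.submatrix ![i, j]).det_nonneg
  rw [det_fin_two] at hdet
  rw [hA.isHermitian.apply]
  exact sub_nonneg.mp hdet

lemma sq_apply_le_mul_of_posSemidef {ι : Type*} {A : Matrix ι ι ℝ} (hA : A.PosSemidef) (i j : ι) :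
    A i j ^ 2 ≤ A i i * A j j := by
  simpa [sq] using apply_mul_star_apply_le_of_posSemidef hA i j

lemma dotProduct_mulVec_le_dotProduct_mulVec {ι : Type*} [Fintype ι] {A B : Matrix ι ι ℝ}
    (hAB : A ≤ B) (y : ι → ℝ) : y ⬝ᵥ A *ᵥ y ≤ y ⬝ᵥ B *ᵥ y := by
  have h : 0 ≤ y ⬝ᵥ (B - A) *ᵥ y := (le_iff.mp hAB).dotProduct_mulVec_nonneg y
  rwa [sub_mulVec, dotProduct_sub, sub_nonneg] at h

variable {ι κ : Type*} [Fintype κ] [DecidableEq κ]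

lemma mul_diagonal_mul_transpose_mono [Finite ι] (B : Matrix ι κ ℝ) :
    Monotone fun x : κ → ℝ => B * diagonal x * Bᵀ := by
  have := Fintype.ofFinite ι
  intro x x' hx
  have hdiag : (diagonal (x' - x)).PosSemidef := .diagonal (sub_nonneg.mpr hx)
  rw [le_iff, ← Matrix.sub_mul, ← Matrix.mul_sub, diagonal_sub]
  exact hdiag.mul_mul_conjTranspose_same B

lemma mul_diagonal_mul_transpose_apply_self (B : Matrix ι κ ℝ) (x : κ → ℝ) (i : ι) :
    (B * diagonal x * Bᵀ) i i = ((B ⊙ B) *ᵥ x) i := by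
  simp only [mul_apply (N := Bᵀ), mul_diagonal, transpose_apply, mulVec, dotProduct, hadamard_apply]
  exact Finset.sum_congr rfl fun k _ => by ring

lemma abs_dotProduct_hadamard_mul_diagonal_mul_transpose_mulVec_le [Fintype ι]
    [DecidableEq ι] {A : Matrix ι ι ℝ} (hA₀ : 0 ≤ A) (hA₁ : A ≤ 1) (B : Matrix ι κ ℝ)
    (x : κ → ℝ) (y : ι → ℝ) :
    |y ⬝ᵥ (A ⊙ (B * diagonal x * Bᵀ)) *ᵥ y| ≤ ∑ i, ((B ⊙ B) *ᵥ |x|) i * y i ^ 2 := by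
  let K : (κ → ℝ) → Matrix ι ι ℝ := fun z => B * diagonal z * Bᵀ
  have hK : Monotone K := mul_diagonal_mul_transpose_mono B
  have hform : ∀ z ≤ |x|, y ⬝ᵥ (A ⊙ K z) *ᵥ y ≤ ∑ i, ((B ⊙ B) *ᵥ |x|) i * y i ^ 2 := by
    intro z hz
    have hK₀ : 0 ≤ K |x| := by simpa [K] using hK (abs_nonneg x)
    have hle : A ⊙ K z ≤ diagonal (K |x|).diag := calc
      A ⊙ K z ≤ A ⊙ K |x| := hadamard_le_hadamard_left hA₀ (hK hz)
      _ = K |x| ⊙ A := hadamard_comm _ _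
      _ ≤ K |x| ⊙ 1 := hadamard_le_hadamard_left hK₀ hA₁
      _ = diagonal (K |x|).diag := hadamard_one _
    refine (dotProduct_mulVec_le_dotProduct_mulVec hle y).trans_eq ?_
    simp only [dotProduct, mulVec_diagonal, diag_apply, K, mul_diagonal_mul_transpose_apply_self]
    exact Finset.sum_congr rfl fun i _ => by ring
  have hneg : y ⬝ᵥ (A ⊙ K (-x)) *ᵥ y = -(y ⬝ᵥ (A ⊙ K x) *ᵥ y) := by
    have hK_neg : K (-x) = -K x := by
      have hdiag : diagonal (-x) = -diagonal x := (diagonal_neg x).symm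
      simp only [K, hdiag, Matrix.mul_neg, Matrix.neg_mul]
    have hhad : A ⊙ K (-x) = -(A ⊙ K x) := by
      ext i j
      simp [hK_neg]
    rw [hhad, neg_mulVec, dotProduct_neg]
  exact abs_le'.mpr ⟨hform x (le_abs_self x), hneg ▸ hform (-x) (neg_le_abs x)⟩

end Loewner

section WeightedCauchySchwarz

variable {ι : Type*} [Fintype ι]

lemma sum_mul_abs_mul_abs_le_sqrt_mul_sqrt {w : ι → ℝ} (hw : 0 ≤ w) (x y : ι → ℝ) :
    ∑ i, w i * (|x i| * |y i|) ≤ √(∑ i, w i * x i ^ 2) * √(∑ i, w i * y i ^ 2) := by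
  have hx : ∀ i, 0 ≤ w i * x i ^ 2 := fun i => mul_nonneg (hw i) (sq_nonneg _)
  have hy : ∀ i, 0 ≤ w i * y i ^ 2 := fun i => mul_nonneg (hw i) (sq_nonneg _)
  rw [← Real.sqrt_mul (Finset.sum_nonneg fun i _ => hx i)]
  refine Real.le_sqrt_of_sq_le <|
    Finset.sum_sq_le_sum_mul_sum_of_sq_le_mul _ (fun i _ => hx i) (fun i _ => hy i) fun i _ => ?_
  rw [mul_pow, mul_pow, sq_abs, sq_abs]
  exact le_of_eq (by ring)

lemma abs_dotProduct_le_mul_sqrt {q τ : ι → ℝ} {s : ℝ} (hq : 0 ≤ q) (hsum : ∑ j, q j ≤ s)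
    (hle : q ≤ s • τ) (x : ι → ℝ) : |q ⬝ᵥ x| ≤ s * √(∑ j, τ j * x j ^ 2) := by
  have hs : 0 ≤ s := (Finset.sum_nonneg fun j _ => hq j).trans hsum
  calc |q ⬝ᵥ x| ≤ ∑ j, q j * (|x j| * |1|) :=
        (Finset.abs_sum_le_sum_abs _ _).trans_eq <| Finset.sum_congr rfl fun j _ => by
          rw [abs_mul, abs_of_nonneg (hq j), abs_one, mul_one]
    _ ≤ √(∑ j, q j * x j ^ 2) * √(∑ j, q j * 1 ^ 2) := sum_mul_abs_mul_abs_le_sqrt_mul_sqrt hq x 1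
    _ ≤ √(∑ j, s * (τ j * x j ^ 2)) * √s := by
        refine mul_le_mul (Real.sqrt_le_sqrt <| Finset.sum_le_sum fun j _ => ?_)
          (Real.sqrt_le_sqrt (by simpa using hsum)) (Real.sqrt_nonneg _) (Real.sqrt_nonneg _)
        rw [← mul_assoc]
        exact mul_le_mul_of_nonneg_right (hle j) (sq_nonneg _)
    _ = s * √(∑ j, τ j * x j ^ 2) := by
        rw [← Finset.mul_sum, Real.sqrt_mul hs, mul_right_comm, Real.mul_self_sqrt hs]

lemma abs_dotProduct_le_sum_abs_mul_norm (q x : ι → ℝ) : |q ⬝ᵥ x| ≤ (∑ j, |q j|) * ‖x‖ := by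
  rw [Finset.sum_mul]
  refine (Finset.abs_sum_le_sum_abs _ _).trans (Finset.sum_le_sum fun j _ => ?_)
  rw [abs_mul]
  gcongr
  exact norm_le_pi_norm x j

lemma abs_dotProduct_diagonal_mul_mulVec_le [DecidableEq ι] {Q : Matrix ι ι ℝ} {w : ι → ℝ}
    (hw : 0 ≤ w) {y : ι → ℝ} (hQ : ∀ i, |(Q *ᵥ y) i| ≤ w i * √(∑ j, w j * y j ^ 2))
    (x : ι → ℝ) :
    |y ⬝ᵥ (diagonal x * Q) *ᵥ y| ≤ (∑ i, w i * y i ^ 2) * √(∑ i, w i * x i ^ 2) := by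
  set N : ℝ := √(∑ i, w i * y i ^ 2)
  have hN_sq : N * N = ∑ i, w i * y i ^ 2 :=
    Real.mul_self_sqrt (Finset.sum_nonneg fun i _ => mul_nonneg (hw i) (sq_nonneg _))
  calc |y ⬝ᵥ (diagonal x * Q) *ᵥ y| = |∑ i, y i * (x i * (Q *ᵥ y) i)| := by
        simp only [← mulVec_mulVec, dotProduct, mulVec_diagonal]
    _ ≤ ∑ i, |y i| * (|x i| * |(Q *ᵥ y) i|) :=
        (Finset.abs_sum_le_sum_abs _ _).trans_eq (by simp only [abs_mul])
    _ ≤ ∑ i, |y i| * (|x i| * (w i * N)) := by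
        gcongr with i
        exact hQ i
    _ = N * ∑ i, w i * (|y i| * |x i|) := by
        rw [Finset.mul_sum]
        exact Finset.sum_congr rfl fun i _ => by ring
    _ ≤ N * (N * √(∑ i, w i * x i ^ 2)) := by
        gcongr
        exact sum_mul_abs_mul_abs_le_sqrt_mul_sqrt hw y x
    _ = (∑ i, w i * y i ^ 2) * √(∑ i, w i * x i ^ 2) := by rw [← mul_assoc, hN_sq]

lemma wNorm_sq {m : ℕ} {σ : Fin m → ℝ} (hσ : 0 ≤ σ) (x : Fin m → ℝ) :
    wNorm σ x ^ 2 = ∑ i, σ i * x i ^ 2 :=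
  Real.sq_sqrt (Finset.sum_nonneg fun i _ => mul_nonneg (hσ i) (sq_nonneg _))

end WeightedCauchySchwarz

section Projection

open scoped ComplexOrder MatrixOrder

lemma apply_self_eq_sum_sq {ι R : Type*} [Fintype ι] [Semiring R] {P : Matrix ι ι R}
    (hsymm : P.IsSymm) (hidem : IsIdempotentElem P) (i : ι) : P i i = ∑ j, P i j ^ 2 := calc
  P i i = ∑ j, P i j * P j i := by rw [← mul_apply, hidem.eq]
  _ = ∑ j, P i j ^ 2 := Finset.sum_congr rfl fun j _ => by rw [hsymm.apply, sq]

lemma trace_eq_rank_of_isIdempotentElem {ι K : Type*} [Fintype ι] [Field K] {P : Matrix ι ι K}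
    (hP : IsIdempotentElem P) : P.trace = P.rank := by
  classical
  have hlin : IsIdempotentElem (toLin' P) := hP.map (toLinAlgEquiv' (R := K) (n := ι))
  rw [← trace_toLin'_eq]
  exact (LinearMap.IsIdempotentElem.isProj_range _ hlin).trace

section RCLike

variable {ι 𝕜 : Type*} [Fintype ι] [RCLike 𝕜] {P : Matrix ι ι 𝕜}

lemma posSemidef_of_isStarProjection (hP : IsStarProjection P) : P.PosSemidef :=
  nonneg_iff_posSemidef.mp hP.nonneg

lemma hadamard_self_le_diagonal_diag [DecidableEq ι] (hP : IsStarProjection P) :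
    P ⊙ P ≤ diagonal P.diag :=
  (hadamard_le_hadamard_left hP.nonneg hP.le_one).trans_eq (hadamard_one P)

lemma diagonal_diag_le_one [DecidableEq ι] (hP : IsStarProjection P) : diagonal P.diag ≤ 1 := calc
  diagonal P.diag = 1 ⊙ P := (one_hadamard P).symm
  _ ≤ 1 ⊙ 1 := hadamard_le_hadamard_left zero_le_one hP.le_one
  _ = 1 := by simp [hadamard_one]

end RCLike

variable {ι : Type*} [Fintype ι] {P : Matrix ι ι ℝ}

lemma sum_hadamard_self_apply (hP : IsStarProjection P) (i : ι) :
    ∑ j, (P ⊙ P) i j = P i i := by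
  simp only [hadamard_apply, ← sq]
  exact (apply_self_eq_sum_sq hP.isSelfAdjoint hP.isIdempotentElem i).symm

lemma abs_hadamard_self_mulVec_le_mul_sqrt (hP : IsStarProjection P) (x : ι → ℝ) (i : ι) :
    |((P ⊙ P) *ᵥ x) i| ≤ P i i * √(∑ j, P j j * x j ^ 2) := by
  have hle : (P ⊙ P) i ≤ P i i • P.diag := fun j =>
    (sq _).symm.trans_le (sq_apply_le_mul_of_posSemidef (posSemidef_of_isStarProjection hP) i j)
  exact abs_dotProduct_le_mul_sqrt (fun _ => mul_self_nonneg _) (sum_hadamard_self_apply hP i).le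
    hle x

lemma abs_hadamard_self_mulVec_le_mul_norm (hP : IsStarProjection P) (x : ι → ℝ) (i : ι) :
    |((P ⊙ P) *ᵥ x) i| ≤ P i i * ‖x‖ := by
  have hrow : ∑ j, |(P ⊙ P) i j| = P i i := by
    simpa only [hadamard_apply, abs_mul_self] using sum_hadamard_self_apply hP i
  exact hrow ▸ abs_dotProduct_le_sum_abs_mul_norm _ x

lemma abs_dotProduct_hadamard_conjugate_mulVec_le [DecidableEq ι]
    (hP : IsStarProjection P) (x y : ι → ℝ) :
    |y ⬝ᵥ (P ⊙ (P * diagonal x * P)) *ᵥ y| ≤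
      (∑ i, P i i * y i ^ 2) * √(∑ i, P i i * x i ^ 2) := by
  have hPt : Pᵀ = P := hP.isSelfAdjoint
  calc |y ⬝ᵥ (P ⊙ (P * diagonal x * P)) *ᵥ y|
      ≤ ∑ i, ((P ⊙ P) *ᵥ |x|) i * y i ^ 2 := by
        simpa only [hPt] using
          abs_dotProduct_hadamard_mul_diagonal_mul_transpose_mulVec_le hP.nonneg hP.le_one P x y
    _ ≤ ∑ i, P i i * √(∑ j, P j j * |x| j ^ 2) * y i ^ 2 := by
        gcongr with i
        exact (le_abs_self _).trans (abs_hadamard_self_mulVec_le_mul_sqrt hP |x| i)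
    _ = (∑ i, P i i * y i ^ 2) * √(∑ i, P i i * x i ^ 2) := by
        simp only [Pi.abs_apply, sq_abs, mul_right_comm, ← Finset.sum_mul]

end Projection

/-- properties of orthogonal projection matrices and leverage scores.
The norm `‖·‖` on `Fin m → ℝ` is the `ℓ∞` norm, and `M ⪯ N` is expressed as
`(N - M).PosSemidef`. -/
theorem projection_matrix_properties {m : ℕ} (P : Matrix (Fin m) (Fin m) ℝ)
    (hsymm : Pᵀ = P) (hidem : P * P = P)
    (σ : Fin m → ℝ) (hσ : ∀ i, σ i = P i i) :
    let P2 : Matrix (Fin m) (Fin m) ℝ := Matrix.of fun i j => (P i j) ^ 2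
    let Sg : Matrix (Fin m) (Fin m) ℝ := Matrix.diagonal σ
    -- (1)
    (∀ i, σ i = ∑ j, (P i j) ^ 2) ∧
    -- (2): 0 ⪯ P^(2) ⪯ Σ ⪯ I
    (P2.PosSemidef ∧ (Sg - P2).PosSemidef ∧
      ((1 : Matrix (Fin m) (Fin m) ℝ) - Sg).PosSemidef) ∧
    -- (3)
    (∀ i j, (P i j) ^ 2 ≤ σ i * σ j) ∧
    -- (4)
    (∀ (x : Fin m → ℝ) (i : Fin m), |P2.mulVec x i| ≤ σ i * wNorm σ x) ∧
    -- (5)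
    (∀ (x : Fin m → ℝ) (i : Fin m), |P2.mulVec x i| ≤ σ i * ‖x‖) ∧
    -- (6)
    ((∑ i, σ i) = (P.rank : ℝ)) ∧
    -- (7)
    (∀ x y : Fin m → ℝ,
      |y ⬝ᵥ (Matrix.diagonal x * P2).mulVec y| ≤ wNorm σ y ^ 2 * wNorm σ x) ∧
    -- (8)
    (∀ x y : Fin m → ℝ,
      |y ⬝ᵥ (Matrix.of fun i j =>
          P i j * (P * Matrix.diagonal x * P) i j).mulVec y| ≤
        wNorm σ y ^ 2 * wNorm σ x) := by
  intro P2 _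
  obtain rfl : σ = P.diag := funext hσ
  have hP : IsStarProjection P := ⟨hidem, hsymm⟩
  have hP2 : P2 = P ⊙ P := Matrix.ext fun i j => sq (P i j)
  have hpsd : P.PosSemidef := posSemidef_of_isStarProjection hP
  have hdiag : 0 ≤ P.diag := fun _ => hpsd.diag_nonneg
  rw [hP2]
  refine ⟨apply_self_eq_sum_sq hsymm hidem,
    ⟨hpsd.hadamard hpsd, hadamard_self_le_diagonal_diag hP, diagonal_diag_le_one hP⟩,
    sq_apply_le_mul_of_posSemidef hpsd, abs_hadamard_self_mulVec_le_mul_sqrt hP,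
    abs_hadamard_self_mulVec_le_mul_norm hP, trace_eq_rank_of_isIdempotentElem hidem,
    fun x y => ?_, fun x y => ?_⟩
  · rw [wNorm_sq hdiag]
    exact abs_dotProduct_diagonal_mul_mulVec_le hdiag (abs_hadamard_self_mulVec_le_mul_sqrt hP y) x
  · rw [wNorm_sq hdiag]
    exact abs_dotProduct_hadamard_conjugate_mulVec_le hP x y
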